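/- Let p > 3 be prime. Then the sum over k from 0 to (p−1)/2 of (4k+1) · ((1/2)_k)^4 / (k!)^4 is congruent to p modulo p^3, where (1/2)_k = (1/2)(3/2)···((2k−1)/2) is the Pochhammer symbol. -/

import Mathlib

/-- The rising factorial (Pochhammer symbol) `(1/2)_k = (1/2)(3/2)⋯((2k-1)/2)` in ℚ. -/
def halfPoch (k : ℕ) : ℚ := ∏ i ∈ Finset.range k, ((1 : ℚ) / 2 + i)

/-- The rising factorial at a general rational argument. -/
def rpoch (x : ℚ) (k : ℕ) : ℚ := ∏ i ∈ Finset.range k, (x + i)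

lemma rpoch_zero (x : ℚ) : rpoch x 0 = 1 := by simp [rpoch]

lemma rpoch_succ (x : ℚ) (k : ℕ) : rpoch x (k + 1) = rpoch x k * (x + k) := by
  simp [rpoch, Finset.prod_range_succ]

lemma rpoch_succ' (x : ℚ) (k : ℕ) : rpoch x (k + 1) = x * rpoch (x + 1) k := by
  simp only [rpoch, Finset.prod_range_succ']
  rw [mul_comm]
  congr 1
  · simp
  · apply Finset.prod_congr rfl
    intro i _
    push_cast
    ring

lemma rpoch_ne (x : ℚ) (h : ∀ i : ℕ, x + i ≠ 0) (k : ℕ) : rpoch x k ≠ 0 :=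
  Finset.prod_ne_zero_iff.mpr fun i _ => h i

/-- The summand of the very well poised series with `a = 1/2`. -/
def dterm (n : ℕ) (b c : ℚ) (k : ℕ) : ℚ :=
  (4 * k + 1) * rpoch (1 / 2) k * rpoch b k * rpoch c k * rpoch (-n) k /
    (k.factorial * rpoch (3 / 2 - b) k * rpoch (3 / 2 - c) k * rpoch (3 / 2 + n) k)

lemma dterm_partial (n : ℕ) (b c : ℚ) (hb : ∀ i : ℕ, 3 / 2 - b + i ≠ 0)
    (hc : ∀ i : ℕ, 3 / 2 - c + i ≠ 0) (K : ℕ) :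
    ∑ k ∈ Finset.range (K + 1), (dterm (n + 1) b c k -
      (3 / 2 + n) * (3 / 2 - b - c + n) / ((3 / 2 - b + n) * (3 / 2 - c + n)) * dterm n b c k)
    = 2 * rpoch (1 / 2) (K + 1) * rpoch b (K + 1) * rpoch c (K + 1) * rpoch (-n) K /
      ((3 / 2 - b + n) * (3 / 2 - c + n) *
      (K.factorial * rpoch (3 / 2 - b) K * rpoch (3 / 2 - c) K * rpoch (5 / 2 + n) K)) := by
  have h1 := hb n
  have h2 := hc n
  induction K with
  | zero =>
    simp only [zero_add, Finset.sum_range_one, dterm, rpoch_succ, rpoch_zero]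
    simp
    rw [sub_eq_iff_eq_add, ← add_div, eq_div_iff (mul_ne_zero h1 h2)]
    ring
  | succ K ih =>
    rw [Finset.sum_range_succ, ih]
    have h3 := rpoch_ne _ hb K
    have h4 := rpoch_ne _ hc K
    have h5 : rpoch (5 / 2 + n) K ≠ 0 := rpoch_ne _ (fun i => by positivity) K
    have h6 := hb K
    have h7 := hc K
    have h8 : (K.factorial : ℚ) ≠ 0 := by exact_mod_cast K.factorial_ne_zero
    have h9 : (5 / 2 + n + K : ℚ) ≠ 0 := by positivity
    have h10 : (3 / 2 + n : ℚ) ≠ 0 := by positivity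
    have h11 : (K + 1 : ℚ) ≠ 0 := by positivity
    have e1 : rpoch (-((n + 1 : ℕ) : ℚ)) (K + 1) = (-n - 1) * rpoch (-n) K := by
      rw [rpoch_succ']; push_cast; congr 1
      · ring
      · congr 1; ring
    have e2 : rpoch (3 / 2 + n) (K + 1) = (3 / 2 + n) * rpoch (5 / 2 + n) K := by
      rw [rpoch_succ']; congr 2; ring
    have e3 : (3 / 2 + ((n + 1 : ℕ) : ℚ)) = 5 / 2 + n := by push_cast; ring
    simp only [dterm, e1, e2, e3]
    simp only [rpoch_succ, Nat.factorial_succ]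
    push_cast
    generalize rpoch (3 / 2 - b) K = B at *
    generalize rpoch (3 / 2 - c) K = C at *
    generalize rpoch (5 / 2 + n) K = D at *
    generalize rpoch (-n) K = E at *
    generalize rpoch b K = B' at *
    generalize rpoch c K = C' at *
    generalize rpoch (1 / 2) K = A at *
    generalize (K.factorial : ℚ) = F at *
    generalize (K : ℚ) = k at *
    generalize (n : ℚ) = m at *
    clear ih
    obtain ⟨x, hx⟩ : ∃ x, x = 3 / 2 - b := ⟨_, rfl⟩
    obtain ⟨y, hy⟩ : ∃ y, y = 3 / 2 - c := ⟨_, rfl⟩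
    have hb' : b = 3 / 2 - x := by rw [hx]; ring
    have hc' : c = 3 / 2 - y := by rw [hy]; ring
    subst hb' hc'
    simp only [sub_sub_cancel] at *
    have h9' : 5 + 2 * m + 2 * k ≠ 0 := fun h => h9 (by linarith)
    have h10' : 3 + 2 * m ≠ 0 := fun h => h10 (by linarith)
    field_simp
    ring

lemma rpoch_neg_zero (n : ℕ) : rpoch (-n) (n + 1) = 0 := by
  rw [rpoch_succ]; simp

lemma dougall (n : ℕ) (b c : ℚ) (hb : ∀ i : ℕ, 3 / 2 - b + i ≠ 0)
    (hc : ∀ i : ℕ, 3 / 2 - c + i ≠ 0) :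
    ∑ k ∈ Finset.range (n + 1), dterm n b c k =
      rpoch (3 / 2) n * rpoch (3 / 2 - b - c) n / (rpoch (3 / 2 - b) n * rpoch (3 / 2 - c) n) := by
  induction n with
  | zero => simp [dterm, rpoch_zero]
  | succ n ih =>
    have h := dterm_partial n b c hb hc (n + 1)
    rw [rpoch_neg_zero, Finset.sum_sub_distrib, ← Finset.mul_sum,
      Finset.sum_range_succ (fun k => dterm n b c k) (n + 1), ih] at h
    have h0 : dterm n b c (n + 1) = 0 := by simp [dterm, rpoch_neg_zero]
    rw [h0] at h
    simp only [mul_zero, zero_div, add_zero] at h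
    rw [sub_eq_zero.mp h]
    simp only [rpoch_succ]
    rw [div_mul_div_comm]
    congr 1 <;> ring

/-- Divisibility of a rational by `p ^ m` in the localization at `p`. -/
def PDvd (p m : ℕ) (q : ℚ) : Prop := ∃ t : ℚ, q = (p : ℚ) ^ m * t ∧ ¬ (p ∣ t.den)

lemma den_add {p : ℕ} (hp : p.Prime) {s t : ℚ} (hs : ¬ p ∣ s.den) (ht : ¬ p ∣ t.den) :
    ¬ p ∣ (s + t).den := fun h =>
  (hp.dvd_mul.mp (h.trans (Rat.add_den_dvd s t))).elim hs ht

lemma den_mul {p : ℕ} (hp : p.Prime) {s t : ℚ} (hs : ¬ p ∣ s.den) (ht : ¬ p ∣ t.den) :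
    ¬ p ∣ (s * t).den := fun h =>
  (hp.dvd_mul.mp (h.trans (Rat.mul_den_dvd s t))).elim hs ht

lemma PDvd.add {p : ℕ} (hp : p.Prime) {m : ℕ} {a b : ℚ} (ha : PDvd p m a) (hb : PDvd p m b) :
    PDvd p m (a + b) := by
  obtain ⟨s, rfl, hs⟩ := ha
  obtain ⟨t, rfl, ht⟩ := hb
  exact ⟨s + t, by ring, den_add hp hs ht⟩

lemma PDvd.mul {p : ℕ} (hp : p.Prime) {l m : ℕ} {a b : ℚ} (ha : PDvd p l a) (hb : PDvd p m b) :
    PDvd p (l + m) (a * b) := by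
  obtain ⟨s, rfl, hs⟩ := ha
  obtain ⟨t, rfl, ht⟩ := hb
  exact ⟨s * t, by ring, den_mul hp hs ht⟩

lemma PDvd.int {p : ℕ} (hp : p.Prime) (z : ℤ) : PDvd p 0 (z : ℚ) :=
  ⟨z, by simp, by simpa using hp.one_lt.ne'⟩

lemma PDvd.self {p : ℕ} (hp : p.Prime) (m : ℕ) : PDvd p m ((p : ℚ) ^ m) :=
  ⟨1, by simp, by simpa using hp.one_lt.ne'⟩

lemma PDvd.neg {p : ℕ} (hp : p.Prime) {m : ℕ} {a : ℚ} (ha : PDvd p m a) : PDvd p m (-a) := by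
  have := (PDvd.int hp (-1)).mul hp ha
  simpa using this

lemma PDvd.inv {p : ℕ} (z : ℤ) (hz : ¬ (p : ℤ) ∣ z) : PDvd p 0 ((z : ℚ)⁻¹) := by
  refine ⟨(z : ℚ)⁻¹, by simp, ?_⟩
  intro h
  rw [Rat.inv_intCast_den] at h
  split_ifs at h with h0
  · exact hz (by simp [h0])
  · exact hz (Int.natCast_dvd.mpr h)

lemma PDvd.sum {p : ℕ} (hp : p.Prime) {m : ℕ} (f : ℕ → ℚ) (N : ℕ)
    (h : ∀ k < N, PDvd p m (f k)) : PDvd p m (∑ k ∈ Finset.range N, f k) := by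
  induction N with
  | zero => exact ⟨0, by simp, by simpa using hp.one_lt.ne'⟩
  | succ N ih =>
    rw [Finset.sum_range_succ]
    exact (ih fun k hk => h k (by omega)).add hp (h N (by omega))

lemma PDvd.prod {p : ℕ} (hp : p.Prime) (f : ℕ → ℚ) (N : ℕ)
    (h : ∀ k < N, PDvd p 0 (f k)) : PDvd p 0 (∏ k ∈ Finset.range N, f k) := by
  induction N with
  | zero => exact ⟨1, by simp, by simpa using hp.one_lt.ne'⟩
  | succ N ih =>
    rw [Finset.prod_range_succ]
    exact (ih fun k hk => h k (by omega)).mul hp (h N (by omega))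

lemma PDvd.prod_sub {p : ℕ} (hp : p.Prime) {m : ℕ} (f g : ℕ → ℚ) (N : ℕ)
    (hf : ∀ k < N, PDvd p 0 (f k)) (hg : ∀ k < N, PDvd p 0 (g k))
    (h : ∀ k < N, PDvd p m (f k - g k)) :
    PDvd p m (∏ k ∈ Finset.range N, f k - ∏ k ∈ Finset.range N, g k) := by
  induction N with
  | zero => exact ⟨0, by simp, by simpa using hp.one_lt.ne'⟩
  | succ N ih =>
    rw [Finset.prod_range_succ, Finset.prod_range_succ]
    have h1 := (PDvd.prod hp f N fun k hk => hf k (by omega)).mul hp (h N (by omega))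
    have h2 := (ih (fun k hk => hf k (by omega)) (fun k hk => hg k (by omega))
      fun k hk => h k (by omega)).mul hp (hg N (by omega))
    rw [zero_add] at h1
    rw [add_zero] at h2
    have h3 := h1.add hp h2
    convert h3 using 1
    ring

lemma fact_rpoch (k : ℕ) : (k.factorial : ℚ) = rpoch 1 k := by
  induction k with
  | zero => simp [rpoch_zero]
  | succ k ih => rw [rpoch_succ, ← ih, Nat.factorial_succ]; push_cast; ring

lemma rpoch_div (x y : ℚ) (k : ℕ) :
    rpoch x k / rpoch y k = ∏ i ∈ Finset.range k, (x + i) / (y + i) := by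
  simp [rpoch, Finset.prod_div_distrib]

/-- Reflection of the rising factorial. -/
lemma rpoch_reflect (x : ℚ) (n : ℕ) : rpoch (1 - x - n) n = (-1) ^ n * rpoch x n := by
  have hc : ((-1 : ℚ)) ^ n = ∏ i ∈ Finset.range n, (-1 : ℚ) := by simp
  rw [rpoch, ← Finset.prod_range_reflect, rpoch, hc, ← Finset.prod_mul_distrib]
  apply Finset.prod_congr rfl
  intro i hi
  have hi := Finset.mem_range.mp hi
  have : ((n - 1 - i : ℕ) : ℚ) = n - 1 - i := by
    rw [Nat.cast_sub (by omega), Nat.cast_sub (by omega)]; simp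
  rw [this]; ring

lemma half_ne (z : ℤ) : (1 / 2 + z : ℚ) ≠ 0 := by
  intro h
  have h2 : (1 + 2 * z : ℚ) = 0 := by linarith
  have h3 : (1 + 2 * z : ℤ) = 0 := by exact_mod_cast h2
  omega

lemma rpoch_three_half (n : ℕ) : rpoch (3 / 2) n = (2 * n + 1) * rpoch (1 / 2) n := by
  have h := rpoch_succ' (1 / 2) n
  rw [rpoch_succ] at h
  have e : (1 / 2 + 1 : ℚ) = 3 / 2 := by norm_num
  rw [e] at h
  linarith


lemma not_dvd_of {n : ℕ} {z : ℤ} (h0 : 0 < z) (h1 : z < 2 * (2 * n + 1)) (h2 : z ≠ 2 * n + 1) :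
    ¬ ((2 * n + 1 : ℕ) : ℤ) ∣ z := by
  rintro ⟨c, rfl⟩
  push_cast at *
  have hc0 : 0 < c := by
    by_contra h
    nlinarith
  have hc2 : c < 2 := by
    by_contra h
    nlinarith
  have : c = 1 := by omega
  subst this
  simp at h2

theorem stmt11 (p : ℕ) (hp : p.Prime) (hp3 : 3 < p) :
    ∃ t : ℚ,
      (∑ k ∈ Finset.range ((p - 1) / 2 + 1),
          ((4 * k + 1 : ℚ)) * (halfPoch k) ^ 4 / ((k.factorial : ℚ)) ^ 4) - p
        = (p : ℚ) ^ 3 * t ∧ ¬ (p ∣ t.den) := by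
  change PDvd p 3 _
  obtain ⟨n, rfl⟩ : ∃ n, p = 2 * n + 1 := hp.odd_of_ne_two (by omega)
  have hn : (2 * n + 1 - 1) / 2 = n := by omega
  rw [hn]
  -- abbreviations for the three quotients
  set P : ℚ := ((2 * n + 1 : ℕ) : ℚ) with hP
  have hPn : P = 2 * n + 1 := by rw [hP]; push_cast; ring
  -- units
  have U1 : ∀ i < n, PDvd (2 * n + 1) 0 ((2 * i + 2 : ℚ)⁻¹) := fun i hi => by
    have := PDvd.inv (p := 2 * n + 1) (2 * i + 2) (not_dvd_of (by omega) (by omega) (by omega))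
    push_cast at this
    exact this
  have U2 : ∀ i < n, PDvd (2 * n + 1) 0 ((2 * i + 2 + P : ℚ)⁻¹) := fun i hi => by
    have := PDvd.inv (p := 2 * n + 1) (2 * i + 2 + (2 * n + 1))
      (not_dvd_of (by omega) (by omega) (by omega))
    push_cast at this
    rw [hPn]
    exact this
  have U3 : ∀ i < n, PDvd (2 * n + 1) 0 ((2 * i + 2 - P : ℚ)⁻¹) := fun i hi => by
    have := (PDvd.inv (p := 2 * n + 1) ((2 * n + 1) - (2 * i + 2))
      (not_dvd_of (by omega) (by omega) (by omega))).neg hp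
    push_cast at this
    rw [hPn, ← neg_sub, inv_neg]
    exact this
  have N1 : ∀ i : ℕ, (2 * i + 2 : ℚ) ≠ 0 := fun i => by positivity
  have N2 : ∀ i : ℕ, (2 * i + 2 + P : ℚ) ≠ 0 := fun i => by positivity
  have N3 : ∀ i : ℕ, (2 * i + 2 - P : ℚ) ≠ 0 := fun i h => by
    apply half_ne (i - n)
    push_cast
    rw [hPn] at h
    linarith
  have I : ∀ z : ℤ, PDvd (2 * n + 1) 0 (z : ℚ) := PDvd.int hp
  -- the elementary factors
  obtain ⟨f, hf⟩ : ∃ f : ℕ → ℚ, f = fun i : ℕ => (2 * (i : ℚ) + 1) / (2 * i + 2) := ⟨_, rfl⟩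
  obtain ⟨g, hg⟩ : ∃ g : ℕ → ℚ, g = fun i : ℕ => (2 * (i : ℚ) + 1 - P) / (2 * i + 2 + P) := ⟨_, rfl⟩
  obtain ⟨h, hh⟩ : ∃ h : ℕ → ℚ, h = fun i : ℕ => (2 * (i : ℚ) + 1 + P) / (2 * i + 2 - P) := ⟨_, rfl⟩
  obtain ⟨e, he⟩ : ∃ e : ℕ → ℚ, e = fun i : ℕ =>
    (2 * (i : ℚ) + 1) ^ 2 / ((2 * i + 2 + P) * (2 * i + 2 - P)) := ⟨_, rfl⟩
  have If : ∀ i < n, PDvd (2 * n + 1) 0 (f i) := fun i hi => by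
    have := (I (2 * i + 1)).mul hp (U1 i hi)
    push_cast at this
    simpa [hf, div_eq_mul_inv] using this
  have Ig : ∀ i < n, PDvd (2 * n + 1) 0 (g i) := fun i hi => by
    have := (I (2 * i + 1 - (2 * n + 1 : ℕ))).mul hp (U2 i hi)
    rw [Int.cast_sub, Int.cast_natCast, ← hP] at this
    push_cast at this
    simpa [hg, div_eq_mul_inv] using this
  have Ih : ∀ i < n, PDvd (2 * n + 1) 0 (h i) := fun i hi => by
    have := (I (2 * i + 1 + (2 * n + 1 : ℕ))).mul hp (U3 i hi)
    rw [Int.cast_add, Int.cast_natCast, ← hP] at this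
    push_cast at this
    simpa [hh, div_eq_mul_inv] using this
  have Ie : ∀ i < n, PDvd (2 * n + 1) 0 (e i) := fun i hi => by
    have := (I ((2 * i + 1) ^ 2)).mul hp ((U2 i hi).mul hp (U3 i hi))
    push_cast at this
    simpa [he, div_eq_mul_inv, mul_comm] using this
  have Dfg : ∀ i < n, PDvd (2 * n + 1) 1 (f i - g i) := fun i hi => by
    have := ((PDvd.self hp 1).mul hp (I (4 * i + 3))).mul hp ((U1 i hi).mul hp (U2 i hi))
    convert this using 1
    rw [← hP, hf, hg]
    have c1 := N1 i
    have c2 := N2 i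
    have c3 := N3 i
    push_cast
    beta_reduce
    generalize hc : (2 * (i : ℚ) + 2) = c at c1 c2 c3 ⊢
    have hi2 : (i : ℚ) = (c - 2) / 2 := by rw [← hc]; ring
    rw [hi2]
    clear_value P
    field_simp
    ring
  have Dff : ∀ i < n, PDvd (2 * n + 1) 2 (f i * f i - g i * h i) := fun i hi => by
    have := ((PDvd.self hp 2).mul hp (I (4 * i + 3))).mul hp
      (((U1 i hi).mul hp (U1 i hi)).mul hp ((U2 i hi).mul hp (U3 i hi)))
    convert this using 1
    rw [← hP, hf, hg, hh]
    have c1 := N1 i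
    have c2 := N2 i
    have c3 := N3 i
    push_cast
    beta_reduce
    generalize hc : (2 * (i : ℚ) + 2) = c at c1 c2 c3 ⊢
    have hi2 : (i : ℚ) = (c - 2) / 2 := by rw [← hc]; ring
    rw [hi2]
    clear_value P
    field_simp
    ring
  have Dfe : ∀ i < n, PDvd (2 * n + 1) 2 (f i * f i - e i) := fun i hi => by
    have := ((PDvd.self hp 2).mul hp (I (-(2 * i + 1) ^ 2))).mul hp
      (((U1 i hi).mul hp (U1 i hi)).mul hp ((U2 i hi).mul hp (U3 i hi)))
    convert this using 1
    rw [← hP, hf, he]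
    have c1 := N1 i
    have c2 := N2 i
    have c3 := N3 i
    push_cast
    beta_reduce
    generalize hc : (2 * (i : ℚ) + 2) = c at c1 c2 c3 ⊢
    have hi2 : (i : ℚ) = (c - 2) / 2 := by rw [← hc]; ring
    rw [hi2]
    clear_value P
    field_simp
    ring
  -- products
  obtain ⟨u, hu⟩ : ∃ u : ℕ → ℚ, u = fun k => ∏ i ∈ Finset.range k, f i := ⟨_, rfl⟩
  obtain ⟨v, hv⟩ : ∃ v : ℕ → ℚ, v = fun k => ∏ i ∈ Finset.range k, g i := ⟨_, rfl⟩
  obtain ⟨w, hw⟩ : ∃ w : ℕ → ℚ, w = fun k => ∏ i ∈ Finset.range k, h i := ⟨_, rfl⟩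
  have Duv : ∀ k < n + 1, PDvd (2 * n + 1) 1 (u k - v k) := fun k hk => by
    rw [hu, hv]
    exact PDvd.prod_sub hp f g k (fun i hi => If i (by omega)) (fun i hi => Ig i (by omega))
      (fun i hi => Dfg i (by omega))
  have Duu : ∀ k < n + 1, PDvd (2 * n + 1) 2 (u k * u k - v k * w k) := fun k hk => by
    rw [hu, hv, hw]
    simp only [← Finset.prod_mul_distrib]
    exact PDvd.prod_sub hp _ _ k (fun i hi => (If i (by omega)).mul hp (If i (by omega)))
      (fun i hi => (Ig i (by omega)).mul hp (Ih i (by omega))) (fun i hi => Dff i (by omega))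
  have Iu : ∀ k < n + 1, PDvd (2 * n + 1) 0 (u k) := fun k hk => by
    rw [hu]
    exact PDvd.prod hp f k fun i hi => If i (by omega)
  have Due : PDvd (2 * n + 1) 2 (u n * u n - ∏ i ∈ Finset.range n, e i) := by
    rw [hu]
    simp only [← Finset.prod_mul_distrib]
    exact PDvd.prod_sub hp _ _ n (fun i hi => (If i (by omega)).mul hp (If i (by omega)))
      (fun i hi => Ie i (by omega)) (fun i hi => Dfe i (by omega))
  have Eu : ∀ k, rpoch (1 / 2) k / k.factorial = u k := fun k => by
    rw [fact_rpoch, rpoch_div, hu, hf]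
    refine Finset.prod_congr rfl fun i _ => ?_
    have := N1 i
    have : (1 + i : ℚ) ≠ 0 := by positivity
    field_simp
    ring
  have Ev : ∀ k, rpoch (-n) k / rpoch (3 / 2 + n) k = v k := fun k => by
    rw [rpoch_div, hv, hg]
    refine Finset.prod_congr rfl fun i _ => ?_
    rw [div_eq_div_iff (by positivity) (N2 i), hPn]
    ring
  have NN : ∀ i : ℕ, (1 / 2 - n + i : ℚ) ≠ 0 := fun i => by
    have := half_ne (i - n)
    push_cast at this
    intro h
    exact this (by linarith)
  have Ew : ∀ k, rpoch (n + 1) k / rpoch (1 / 2 - n) k = w k := fun k => by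
    rw [rpoch_div, hw, hh]
    refine Finset.prod_congr rfl fun i _ => ?_
    rw [div_eq_div_iff (NN i) (N3 i), hPn]
    ring
  have Ee : rpoch (1 / 2) n * rpoch (1 / 2) n / (rpoch (3 / 2 + n) n * rpoch (1 / 2 - n) n) =
      ∏ i ∈ Finset.range n, e i := by
    rw [mul_div_mul_comm, rpoch_div, rpoch_div, ← Finset.prod_mul_distrib, he]
    refine Finset.prod_congr rfl fun i _ => ?_
    rw [div_mul_div_comm, div_eq_div_iff (mul_ne_zero (by positivity) (NN i))
      (mul_ne_zero (N2 i) (N3 i)), hPn]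
    ring
  -- the three exact evaluations
  have hhalf : ∀ i : ℕ, (3 / 2 - 1 / 2 + i : ℚ) ≠ 0 := fun i => by
    norm_num
    positivity
  have hsub : (3 / 2 - (n + 1) : ℚ) = 1 / 2 - n := by ring
  have hcn : ∀ i : ℕ, (3 / 2 - (n + 1) + i : ℚ) ≠ 0 := fun i => by rw [hsub]; exact NN i
  have hbn : ∀ i : ℕ, (3 / 2 - (-n) + i : ℚ) ≠ 0 := fun i => by rw [sub_neg_eq_add]; positivity
  have e1 : (3 / 2 - 1 / 2 : ℚ) = 1 := by norm_num
  have G1 := dougall n (1 / 2) (n + 1) hhalf hcn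
  have G2 := dougall n (-n) (n + 1) hbn hcn
  have G3 := dougall n (1 / 2) (1 / 2) hhalf hhalf
  have H0 : rpoch (1 / 2) n ≠ 0 := rpoch_ne _ (fun i => by positivity) n
  have T1 : ∑ k ∈ Finset.range (n + 1), (4 * k + 1 : ℚ) * (u k * u k * v k * w k) = P := by
    have a1 : (3 / 2 - 1 / 2 - (n + 1) : ℚ) = 1 - 1 - n := by ring
    have a2 : (3 / 2 - (n + 1) : ℚ) = 1 - 1 / 2 - n := by ring
    rw [a1, a2, rpoch_reflect, rpoch_reflect, e1, rpoch_three_half, ← hPn] at G1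
    have H1 : rpoch 1 n ≠ 0 := rpoch_ne _ (fun i => by positivity) n
    have : ((-1 : ℚ)) ^ n ≠ 0 := by simp
    rw [show P * rpoch (1 / 2) n * ((-1) ^ n * rpoch 1 n) /
      (rpoch 1 n * ((-1) ^ n * rpoch (1 / 2) n)) = P by field_simp] at G1
    rw [← G1]
    refine Finset.sum_congr rfl fun k _ => ?_
    rw [← Eu, ← Ev, ← Ew, dterm, e1, hsub, ← fact_rpoch]
    simp only [div_eq_mul_inv, mul_inv]
    ring
  have T2 : ∑ k ∈ Finset.range (n + 1), (4 * k + 1 : ℚ) * (u k * v k * v k * w k) =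
      P * ∏ i ∈ Finset.range n, e i := by
    have a1 : (3 / 2 - (-n) - (n + 1) : ℚ) = 1 / 2 := by ring
    rw [a1, sub_neg_eq_add, hsub, rpoch_three_half, ← hPn, mul_assoc, mul_div_assoc, Ee] at G2
    rw [← G2]
    refine Finset.sum_congr rfl fun k _ => ?_
    rw [← Eu, ← Ev, ← Ew, dterm, sub_neg_eq_add, hsub]
    simp only [div_eq_mul_inv, mul_inv]
    ring
  have T3 : ∑ k ∈ Finset.range (n + 1), (4 * k + 1 : ℚ) * (u k * u k * u k * v k) =
      P * (u n * u n) := by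
    have a1 : (3 / 2 - 1 / 2 - 1 / 2 : ℚ) = 1 / 2 := by norm_num
    rw [a1, e1, rpoch_three_half, ← hPn, mul_assoc, mul_div_assoc, mul_div_mul_comm,
      ← fact_rpoch, Eu] at G3
    rw [← G3]
    refine Finset.sum_congr rfl fun k _ => ?_
    rw [← Eu, ← Ev, dterm, e1, ← fact_rpoch]
    simp only [div_eq_mul_inv, mul_inv]
    ring
  have key : (∑ k ∈ Finset.range (n + 1),
      ((4 * k + 1 : ℚ)) * (halfPoch k) ^ 4 / ((k.factorial : ℚ)) ^ 4) - P =
      ∑ k ∈ Finset.range (n + 1),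
        (4 * k + 1 : ℚ) * u k * ((u k - v k) * (u k * u k - v k * w k)) +
      P * (u n * u n - ∏ i ∈ Finset.range n, e i) := by
    rw [mul_sub, ← T2, ← T3]
    nth_rewrite 1 [← T1]
    simp only [← Finset.sum_sub_distrib, ← Finset.sum_add_distrib]
    refine Finset.sum_congr rfl fun k _ => ?_
    rw [mul_div_assoc, ← div_pow, show halfPoch k = rpoch (1 / 2) k from rfl, Eu]
    ring
  rw [key]
  refine PDvd.add hp (PDvd.sum hp _ _ fun k hk => ?_) ?_
  · have := ((I (4 * k + 1)).mul hp (Iu k hk)).mul hp ((Duv k hk).mul hp (Duu k hk))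
    push_cast at this
    exact this
  · have := (PDvd.self hp 1).mul hp Due
    rw [pow_one] at this
    exact this
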